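/- Consider the IQN setup and iteration, and assume additionally x^t ≠ x* for all t. There exist positive constants ε and δ such that: if ‖x⁰ − x*‖ < ε and ‖B_i⁰ − ∇²f_i(x*)‖_{M_i} < δ for M_i = ∇²f_i(x*)^{−1/2} and every i = 1,…,n, then there exists a sequence of positive reals (ζ^t)_{t≥0} such that ‖x^t − x*‖ ≤ ζ^t for all t ≥ 0 and lim_{t→∞} ζ^{t+1}/ζ^t = 0; i.e., the residual sequence converges to zero R-superlinearly. -/

import Mathlib

open Matrix Filter RealInnerProductSpace

noncomputable section

abbrev Vec (p : ℕ) := EuclideanSpace ℝ (Fin p)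
abbrev Mat (p : ℕ) := Matrix (Fin p) (Fin p) ℝ

/-- A matrix acting on Euclidean space as a linear map. -/
def applyM {p : ℕ} (A : Mat p) (v : Vec p) : Vec p := Matrix.toEuclideanCLM (𝕜 := ℝ) A v

/-- Operator norm of a matrix induced by the Euclidean vector norm. -/
def opNorm {p : ℕ} (A : Mat p) : ℝ := ‖Matrix.toEuclideanCLM (𝕜 := ℝ) A‖

/-- Frobenius norm of a matrix. -/
def frobNorm {p : ℕ} (A : Mat p) : ℝ := Real.sqrt (∑ i, ∑ j, (A i j)^2)

/-- Weighted matrix norm ‖A‖_M = ‖M A M‖_F. -/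
def wNorm {p : ℕ} (M A : Mat p) : ℝ := frobNorm (M * A * M)

/-- Underlying function of a Euclidean vector. -/
def toFn {p : ℕ} (v : Vec p) : Fin p → ℝ := (WithLp.equiv 2 (Fin p → ℝ)) v

/-- Outer product a bᵀ. -/
def outer {p : ℕ} (a b : Vec p) : Mat p := Matrix.vecMulVec (toFn a) (toFn b)

/-- Bilinear form uᵀ B v. -/
def quadForm {p : ℕ} (B : Mat p) (u v : Vec p) : ℝ := toFn u ⬝ᵥ B.mulVec (toFn v)

/-- Dot product aᵀ b. -/
def dotV {p : ℕ} (a b : Vec p) : ℝ := toFn a ⬝ᵥ toFn b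

/-- The BFGS update  B⁺ = B + yyᵀ/(yᵀs) − B s sᵀ B/(sᵀ B s). -/
def bfgsUpdate {p : ℕ} (B : Mat p) (s y : Vec p) : Mat p :=
  B + (dotV y s)⁻¹ • outer y y - (quadForm B s s)⁻¹ • (B * outer s s * B)

/-- `H` is the Hessian (matrix of second derivatives) of `g`. -/
def HasHessian {p : ℕ} (g : Vec p → ℝ) (H : Vec p → Mat p) : Prop :=
  ∀ x, HasFDerivAt (gradient g) (Matrix.toEuclideanCLM (𝕜 := ℝ) (H x) : Vec p →L[ℝ] Vec p) x

/-- The cyclic index `i_t = (t mod n) + 1` (0-indexed: `t mod n`). -/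
def cyc {n : ℕ} (hn : 1 ≤ n) (t : ℕ) : Fin n := ⟨t % n, Nat.mod_lt t hn⟩

/-- The IQN problem data: `n` twice continuously differentiable sample functions
`f i : ℝ^p → ℝ`, `μ`-strongly convex with `L`-Lipschitz gradients and `L̃`-Lipschitz
Hessians, and the optimizer `x*` of `f = (1/n) Σ f i`. -/
structure IQNProblem (p n : ℕ) where
  hp : 1 ≤ p
  hn : 1 ≤ n
  f : Fin n → Vec p → ℝ
  Hess : Fin n → Vec p → Mat p
  mu : ℝ
  Lg : ℝ
  Ltil : ℝ
  xstar : Vec p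
  hmu : 0 < mu
  hmuL : mu ≤ Lg
  hLtil : 0 < Ltil
  hC2 : ∀ i, ContDiff ℝ 2 (f i)
  hHess : ∀ i, HasHessian (f i) (Hess i)
  hlow : ∀ i, ∀ x xh : Vec p,
    mu * ‖x - xh‖^2 ≤ ⟪gradient (f i) x - gradient (f i) xh, x - xh⟫
  hup : ∀ i, ∀ x xh : Vec p,
    ⟪gradient (f i) x - gradient (f i) xh, x - xh⟫ ≤ Lg * ‖x - xh‖^2
  hLip : ∀ i, ∀ u v : Vec p, opNorm (Hess i u - Hess i v) ≤ Ltil * ‖u - v‖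
  hopt : gradient (fun x => (n : ℝ)⁻¹ * ∑ i, f i x) xstar = 0
  hmin : ∀ x : Vec p, (n : ℝ)⁻¹ * ∑ i, f i xstar ≤ (n : ℝ)⁻¹ * ∑ i, f i x

/-- A run of the IQN iteration: sequences `x^t`, `z_i^t` and symmetric matrices `B_i^t`
following the IQN update with cyclic index, all steps assumed well defined. -/
structure IQNState {p n : ℕ} (P : IQNProblem p n) where
  x : ℕ → Vec p
  z : Fin n → ℕ → Vec p
  B : Fin n → ℕ → Mat p
  hz0 : ∀ i, z i 0 = x 0
  hsym : ∀ i t, (B i t).IsSymm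
  hinv : ∀ t, IsUnit ((n : ℝ)⁻¹ • ∑ i, B i t)
  hx : ∀ t, x (t+1) = applyM ((n : ℝ)⁻¹ • ∑ i, B i t)⁻¹
      ((n : ℝ)⁻¹ • ∑ i, applyM (B i t) (z i t) - (n : ℝ)⁻¹ • ∑ i, gradient (P.f i) (z i t))
  hzupd : ∀ t, z (cyc P.hn t) (t+1) = x (t+1)
  hzfix : ∀ t, ∀ j, j ≠ cyc P.hn t → z j (t+1) = z j t
  hs : ∀ t, z (cyc P.hn t) (t+1) - z (cyc P.hn t) t ≠ 0
  hys : ∀ t, dotV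
      (gradient (P.f (cyc P.hn t)) (z (cyc P.hn t) (t+1)) -
        gradient (P.f (cyc P.hn t)) (z (cyc P.hn t) t))
      (z (cyc P.hn t) (t+1) - z (cyc P.hn t) t) ≠ 0
  hsBs : ∀ t, quadForm (B (cyc P.hn t) t)
      (z (cyc P.hn t) (t+1) - z (cyc P.hn t) t)
      (z (cyc P.hn t) (t+1) - z (cyc P.hn t) t) ≠ 0
  hBupd : ∀ t, B (cyc P.hn t) (t+1) = bfgsUpdate (B (cyc P.hn t) t)
      (z (cyc P.hn t) (t+1) - z (cyc P.hn t) t)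
      (gradient (P.f (cyc P.hn t)) (z (cyc P.hn t) (t+1)) -
        gradient (P.f (cyc P.hn t)) (z (cyc P.hn t) t))
  hBfix : ∀ t, ∀ j, j ≠ cyc P.hn t → B j (t+1) = B j t


def tailSup (g : ℕ → ℝ) (t : ℕ) : ℝ := ⨆ k, g (t + k)

theorem tailSup_bdd {g : ℕ → ℝ} (h : BddAbove (Set.range g)) (t : ℕ) :
    BddAbove (Set.range fun k => g (t + k)) := by
  obtain ⟨b, hb⟩ := h
  exact ⟨b, by rintro _ ⟨k, rfl⟩; exact hb ⟨_, rfl⟩⟩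

theorem le_tailSup {g : ℕ → ℝ} (h : BddAbove (Set.range g)) {t s : ℕ} (hts : t ≤ s) :
    g s ≤ tailSup g t := by
  obtain ⟨k, rfl⟩ := Nat.exists_eq_add_of_le hts
  exact le_ciSup (tailSup_bdd h t) k

theorem tailSup_le {g : ℕ → ℝ} {t : ℕ} {b : ℝ} (h : ∀ s, t ≤ s → g s ≤ b) :
    tailSup g t ≤ b := ciSup_le fun k => h _ (Nat.le_add_right _ _)

theorem tailSup_anti {g : ℕ → ℝ} (h : BddAbove (Set.range g)) : Antitone (tailSup g) := by
  intro t s hts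
  exact tailSup_le fun r hr => le_tailSup h (hts.trans hr)

theorem tailSup_tendsto {g : ℕ → ℝ} (h0 : ∀ t, 0 ≤ g t) (h : Tendsto g atTop (nhds 0)) :
    Tendsto (tailSup g) atTop (nhds 0) := by
  have hb : BddAbove (Set.range g) := h.bddAbove_range
  rw [Metric.tendsto_atTop]
  intro ε hε
  rw [Metric.tendsto_atTop] at h
  obtain ⟨N, hN⟩ := h (ε/2) (by positivity)
  refine ⟨N, fun t ht => ?_⟩
  have h1 : tailSup g t ≤ ε/2 := tailSup_le fun s hs => by
    have := hN s (ht.trans hs)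
    rw [Real.dist_eq, sub_zero] at this
    exact (le_abs_self _).trans this.le
  have h2 : 0 ≤ tailSup g t := (h0 t).trans (le_tailSup hb le_rfl)
  rw [Real.dist_eq, sub_zero, abs_of_nonneg h2]
  linarith

theorem cyc_next {n : ℕ} (hn : 1 ≤ n) (i : Fin n) (t : ℕ) :
    ∃ s, t ≤ s ∧ s < t + n ∧ cyc hn s = i := by
  have hi := i.2
  have hm : t % n < n := Nat.mod_lt _ hn
  have hd := Nat.div_add_mod t n
  by_cases h : t % n ≤ i
  · refine ⟨n * (t / n) + i, by omega, by omega, ?_⟩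
    apply Fin.ext
    simp [cyc, Nat.mul_add_mod, Nat.mod_eq_of_lt hi]
  · refine ⟨n * (t / n + 1) + i, by rw [Nat.mul_add]; omega, by rw [Nat.mul_add]; omega, ?_⟩
    apply Fin.ext
    simp [cyc, Nat.mul_add_mod, Nat.mod_eq_of_lt hi]

theorem cyc_last {n : ℕ} (hn : 1 ≤ n) {e : Fin n → ℕ → ℝ} {σ : ℕ → ℝ}
    (h0 : ∀ i, e i 0 = σ 0) (hu : ∀ t, e (cyc hn t) (t+1) = σ (t+1))
    (hf : ∀ t j, j ≠ cyc hn t → e j (t+1) = e j t) (i : Fin n) (t : ℕ) :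
    ∃ τ, τ ≤ t ∧ t < τ + n ∧ e i t = σ τ := by
  have key : ∃ τ, τ ≤ t ∧ e i t = σ τ ∧ ∀ s, τ ≤ s → s < t → i ≠ cyc hn s := by
    induction t with
    | zero => exact ⟨0, le_rfl, h0 i, by intro s _ h; omega⟩
    | succ t ih =>
      by_cases h : i = cyc hn t
      · exact ⟨t+1, le_rfl, by rw [h]; exact hu t, by intro s _ h; omega⟩
      · obtain ⟨τ, h1, h2, h3⟩ := ih
        refine ⟨τ, by omega, by rw [hf t i h, h2], fun s hs hs' => ?_⟩
        by_cases hst : s = t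
        · rw [hst]; exact h
        · exact h3 s hs (by omega)
  obtain ⟨τ, h1, h2, h3⟩ := key
  refine ⟨τ, h1, ?_, h2⟩
  by_contra hcon
  obtain ⟨s, hs1, hs2, hs3⟩ := cyc_next hn i τ
  exact h3 s hs1 (by omega) hs3.symm

theorem cyc_first {n : ℕ} (hn : 1 ≤ n) (i : Fin n) (t : ℕ) :
    ∃ s, t ≤ s ∧ cyc hn s = i ∧ ∀ (g : Fin n → ℕ → ℝ),
      (∀ t j, j ≠ cyc hn t → g j (t+1) = g j t) → g i s = g i t := by
  classical
  have hex : ∃ k, cyc hn (t + k) = i := by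
    obtain ⟨s, h1, _, h3⟩ := cyc_next hn i t
    exact ⟨s - t, by rw [Nat.add_sub_cancel' h1]; exact h3⟩
  refine ⟨t + Nat.find hex, Nat.le_add_right _ _, Nat.find_spec hex, fun g hg => ?_⟩
  have : ∀ k, k ≤ Nat.find hex → g i (t + k) = g i t := by
    intro k
    induction k with
    | zero => intro _; rfl
    | succ k ih =>
      intro hk
      rw [← add_assoc, hg (t+k) i (fun h => Nat.find_min hex (m := k) (by omega) h.symm)]
      exact ih (by omega)
  exact this _ le_rfl

/-- Building the dominating sequence. -/
theorem build_zeta {n : ℕ} (hn : 1 ≤ n) {U ω : ℕ → ℝ} (hU : Antitone U) (hω : Antitone ω)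
    (hω0 : ∀ t, 0 < ω t) (hωt : Tendsto ω atTop (nhds 0))
    (h : ∀ t, U (t + n) ≤ ω t * U t) :
    ∃ ζ : ℕ → ℝ, (∀ t, 0 < ζ t) ∧ (∀ t, U t ≤ ζ t) ∧
      Tendsto (fun t : ℕ => ζ (t+1) / ζ t) atTop (nhds 0) := by
  set a : ℕ → ℝ := fun s => (ω (s + 1 - n)) ^ ((n:ℝ)⁻¹) with ha
  have hn0 : (n:ℝ) ≠ 0 := by positivity
  have ha0 : ∀ s, 0 < a s := fun s => Real.rpow_pos_of_pos (hω0 _) _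
  have hat : Tendsto a atTop (nhds 0) := by
    have h1 : Tendsto (fun s : ℕ => s + 1 - n) atTop atTop :=
      tendsto_atTop_atTop.2 fun b => ⟨b + n, fun s hs => by omega⟩
    have h2 := (hωt.comp h1).rpow_const (p := (n:ℝ)⁻¹) (Or.inr (by positivity))
    rw [Real.zero_rpow (by positivity)] at h2
    exact h2
  have hanti : Antitone a := by
    intro s t hst
    exact Real.rpow_le_rpow (hω0 _).le (hω (by omega)) (by positivity)
  set P : ℕ → ℝ := fun t => ∏ s ∈ Finset.range t, a s with hP
  have hP0 : ∀ t, 0 < P t := fun t => Finset.prod_pos fun s _ => ha0 s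
  have hPn : ∀ t, ω t * P t ≤ P (t + n) := by
    intro t
    have h1 : P (t + n) = P t * ∏ k ∈ Finset.range n, a (t + k) := Finset.prod_range_add _ _ _
    have h2 : ω t ≤ ∏ k ∈ Finset.range n, a (t + k) := by
      have h3 : ω t = ∏ k ∈ Finset.range n, a (t + n - 1) := by
        rw [Finset.prod_const, Finset.card_range, ha]
        simp only
        rw [show t + n - 1 + 1 - n = t by omega, Real.rpow_inv_natCast_pow (hω0 t).le (by omega)]
      rw [h3]
      apply Finset.prod_le_prod
      · intro _ _; exact (ha0 _).le
      · intro k hk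
        rw [Finset.mem_range] at hk
        exact hanti (by omega)
    rw [h1, mul_comm]
    exact mul_le_mul_of_nonneg_left h2 (hP0 t).le
  set C : ℝ := ∑ s ∈ Finset.range n, (|U s| + 1) / P s with hC
  have hterm : ∀ s, 0 < (|U s| + 1) / P s := fun s => div_pos (by positivity) (hP0 s)
  have hC0 : 0 < C := Finset.sum_pos (fun s _ => hterm s) ⟨0, Finset.mem_range.2 hn⟩
  refine ⟨fun t => C * P t, fun t => mul_pos hC0 (hP0 t), ?_, ?_⟩
  · intro t
    induction t using Nat.strong_induction_on with
    | _ t ih =>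
      by_cases ht : t < n
      · have h1 : (|U t| + 1) / P t ≤ C :=
          Finset.single_le_sum (f := fun s => (|U s| + 1) / P s) (fun s _ => (hterm s).le)
            (Finset.mem_range.2 ht)
        rw [div_le_iff₀ (hP0 t)] at h1
        have := le_abs_self (U t)
        show U t ≤ C * P t
        linarith
      · obtain ⟨k, rfl⟩ := Nat.exists_eq_add_of_le (not_lt.1 ht)
        rw [add_comm n k]
        have h1 := ih k (by omega)
        calc U (k + n) ≤ ω k * U k := h k
          _ ≤ ω k * (C * P k) := mul_le_mul_of_nonneg_left h1 (hω0 k).le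
          _ = C * (ω k * P k) := by ring
          _ ≤ C * P (k + n) := mul_le_mul_of_nonneg_left (hPn k) hC0.le
  · convert hat using 2 with t
    have : P (t+1) = P t * a t := Finset.prod_range_succ _ _
    simp only [this]
    have h1 := hC0.ne'
    have h2 := (hP0 t).ne'
    field_simp

set_option maxHeartbeats 2000000 in
theorem scalar_main {n : ℕ} (hn : 1 ≤ n) (κ Lt : ℝ) (hκ : 1 ≤ κ) (hL : 0 < Lt) :
    ∃ ε > (0:ℝ), ∃ δ > (0:ℝ), ∀ (σ : ℕ → ℝ) (e a d : Fin n → ℕ → ℝ) (q : ℕ → ℝ),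
      (∀ t, 0 < σ t) → (∀ i t, 0 ≤ e i t) → (∀ i t, 0 ≤ a i t) → (∀ t, 0 ≤ q t) →
      (∀ i, e i 0 = σ 0) → (∀ t, e (cyc hn t) (t+1) = σ (t+1)) →
      (∀ t j, j ≠ cyc hn t → e j (t+1) = e j t) →
      (∀ t j, j ≠ cyc hn t → a j (t+1) = a j t) →
      (∀ t j, j ≠ cyc hn t → d j (t+1) = d j t) →
      (∀ t, (∀ i, a i t ≤ 1/2) → n * σ (t+1) ≤ 2 * κ^2 * ∑ i, (d i t + Lt * (e i t)^2)) →
      (∀ i t, d i t ≤ κ^2 * a i t * e i t) →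
      (∀ t η, a (cyc hn t) t ≤ 1/2 → e (cyc hn t) t ≤ η → σ (t+1) ≤ η → κ^2 * Lt * η ≤ 1/2 →
        (a (cyc hn t) (t+1))^2 ≤ (a (cyc hn t) t)^2 - (q t)^2/4 + 32 * (κ^2 * Lt * η)) →
      (∀ t, d (cyc hn t) t ≤ κ^2 * q t * (e (cyc hn t) t + σ (t+1))
          + κ^2 * a (cyc hn t) t * σ (t+1)) →
      σ 0 < ε → (∀ i, a i 0 < δ) →
      ∃ ζ : ℕ → ℝ, (∀ t, 0 < ζ t) ∧ (∀ t, σ t ≤ ζ t) ∧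
        Tendsto (fun t : ℕ => ζ (t+1) / ζ t) atTop (nhds 0) := by
  have hκ0 : 0 < κ := by linarith
  have hnR : (1:ℝ) ≤ n := by exact_mod_cast hn
  have hn0 : (0:ℝ) < n := by linarith
  set δ0 : ℝ := 1 / (8 * κ^4) with hδ0
  have hδ0p : 0 < δ0 := by positivity
  have hκ2 : 1 ≤ κ^2 := one_le_pow₀ hκ
  have hκ4 : 1 ≤ κ^4 := one_le_pow₀ hκ
  have hδκ : κ^4 * δ0 = 1/8 := by rw [hδ0]; field_simp
  have hδ8 : δ0 ≤ 1/8 := by nlinarith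
  set ε : ℝ := δ0^2 / (256 * n * κ^2 * Lt) with hε
  have hεp : 0 < ε := by positivity
  set C : ℝ := 128 * n * κ^2 * Lt * ε with hC
  have hCv : C = δ0^2 / 2 := by rw [hC, hε]; field_simp; norm_num
  have hCp : 0 < C := by positivity
  have hLε : κ^2 * Lt * ε ≤ 1/128 := by
    have h1 : κ^2 * Lt * ε * n = δ0^2/256 := by rw [hε]; field_simp
    have h2 : 0 < κ^2 * Lt * ε := by positivity
    nlinarith
  set ρ : ℝ := 1 - 1 / (2 * n) with hρ
  have hρ1 : 1 / (2 * (n:ℝ)) ≤ 1/2 := by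
    rw [div_le_div_iff₀ (by positivity) (by norm_num)]; linarith
  have hρ0 : 0 < ρ := by rw [hρ]; linarith
  have hρlt : ρ < 1 := by rw [hρ]; have : 0 < 1 / (2 * (n:ℝ)) := by positivity
                          linarith
  have hρn : 1/2 ≤ ρ^n := by
    have h1 := one_add_mul_le_pow (a := -(1 / (2 * (n:ℝ)))) (by linarith) n
    have h2 : (n:ℝ) * -(1/(2*(n:ℝ))) = -(1/2) := by field_simp
    have h3 : 1 + (n:ℝ) * -(1/(2*(n:ℝ))) ≤ ρ^n := by simpa [hρ, sub_eq_add_neg] using h1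
    linarith
  clear_value δ0 ε C ρ
  refine ⟨ε, hεp, δ0/2, by positivity, ?_⟩
  intro σ e a d q hσ he ha hq he0 heu hef haf hdf F1 Fd F2 F3 hσ0 ha0
  -- linear convergence
  have last := fun i t => cyc_last hn he0 heu hef i t
  have hρle : ∀ t, ρ^t ≤ 1 := fun t => pow_le_one₀ hρ0.le hρlt.le
  have elin : ∀ t, (∀ τ, τ ≤ t → σ τ ≤ ε * ρ^τ) → ∀ i, e i t ≤ 2 * ε * ρ^(t+1) ∧ e i t ≤ ε := by
    intro t h i
    obtain ⟨τ, h1, h2, h3⟩ := last i t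
    rw [h3]
    have h4 := h τ h1
    have h5 : ρ^(τ + n) ≤ ρ^(t+1) := pow_le_pow_of_le_one hρ0.le hρlt.le (by omega)
    rw [pow_add] at h5
    have h6 : 0 < ρ^τ := pow_pos hρ0 _
    constructor
    · have : ρ^τ ≤ 2 * ρ^(t+1) := by nlinarith
      nlinarith
    · have := hρle τ
      nlinarith
  have abound : ∀ t i, (a i t)^2 ≤ (δ0/2)^2 + C * (1 - ρ^t) → a i t ≤ δ0 := by
    intro t i h
    have h6 : 0 < ρ^t := pow_pos hρ0 _
    have : (a i t)^2 ≤ δ0^2 := by nlinarith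
    exact (sq_le_sq₀ (ha i t) hδ0p.le).1 this
  have step : ∀ t, (∀ τ, τ ≤ t → σ τ ≤ ε * ρ^τ) → (∀ i, a i t ≤ δ0) →
      σ (t+1) ≤ ε * ρ^(t+1) := by
    intro t h1 h2
    have h3 := F1 t (fun i => by linarith [h2 i])
    have h6 : 0 < ρ^(t+1) := pow_pos hρ0 _
    have h4 : ∑ i, (d i t + Lt * (e i t)^2) ≤
        ∑ i : Fin n, (κ^2 * δ0 + Lt * ε) * (2 * ε * ρ^(t+1)) := by
      apply Finset.sum_le_sum
      intro i _
      obtain ⟨g1, g2⟩ := elin t h1 i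
      have g3 := Fd i t
      have g4 : κ^2 * a i t * e i t ≤ κ^2 * δ0 * e i t := by
        apply mul_le_mul_of_nonneg_right _ (he i t)
        exact mul_le_mul_of_nonneg_left (h2 i) (by positivity)
      have g5 : Lt * (e i t)^2 ≤ Lt * ε * e i t := by
        have := mul_le_mul_of_nonneg_right g2 (he i t)
        nlinarith
      have g6 : (κ^2 * δ0 + Lt * ε) * e i t ≤ (κ^2 * δ0 + Lt * ε) * (2 * ε * ρ^(t+1)) :=
        mul_le_mul_of_nonneg_left g1 (by positivity)
      linarith
    rw [Finset.sum_const, Finset.card_univ, Fintype.card_fin, nsmul_eq_mul] at h4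
    have h5 : (n:ℝ) * σ (t+1) ≤ n * (ε * ρ^(t+1)) := by
      calc (n:ℝ) * σ (t+1) ≤ 2 * κ^2 * (n * ((κ^2 * δ0 + Lt * ε) * (2 * ε * ρ^(t+1)))) :=
            h3.trans (mul_le_mul_of_nonneg_left h4 (by positivity))
        _ = (4 * (κ^4 * δ0 + κ^2 * Lt * ε)) * (n * (ε * ρ^(t+1))) := by ring
        _ ≤ 1 * (n * (ε * ρ^(t+1))) := by
            apply mul_le_mul_of_nonneg_right _ (by positivity)
            linarith
        _ = _ := one_mul _
    exact le_of_mul_le_mul_left h5 hn0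
  have step2 : ∀ t, (∀ τ, τ ≤ t → σ τ ≤ ε * ρ^τ) → (∀ i, a i t ≤ δ0) →
      (a (cyc hn t) (t+1))^2 ≤ (a (cyc hn t) t)^2 - (q t)^2/4 + C * (ρ^t - ρ^(t+1)) := by
    intro t h1 h2
    have h6 : 0 < ρ^(t+1) := pow_pos hρ0 _
    have h7 := hρle (t+1)
    have h3 := F2 t (2 * ε * ρ^(t+1)) (by linarith [h2 (cyc hn t)]) (elin t h1 _).1
      (by have := step t h1 h2; nlinarith)
      (by
        have : κ^2 * Lt * ε * ρ^(t+1) ≤ κ^2 * Lt * ε * 1 :=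
          mul_le_mul_of_nonneg_left h7 (by positivity)
        nlinarith)
    have h8 : C * (ρ^t - ρ^(t+1)) = 64 * (κ^2 * Lt * ε) * ρ^t := by
      have : ρ^t - ρ^(t+1) = ρ^t * (1/(2*n)) := by rw [pow_succ, hρ]; ring
      rw [this, hC]; field_simp; norm_num
    have h9 : ρ^(t+1) ≤ ρ^t := pow_le_pow_of_le_one hρ0.le hρlt.le (by omega)
    have h10 := mul_le_mul_of_nonneg_left h9 (show 0 ≤ 64 * (κ^2 * Lt * ε) by positivity)
    linarith
  have inv : ∀ t, (∀ τ, τ ≤ t → σ τ ≤ ε * ρ^τ) ∧ ∀ i, (a i t)^2 ≤ (δ0/2)^2 + C * (1 - ρ^t) := by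
    intro t
    induction t with
    | zero =>
      constructor
      · intro τ hτ
        rw [Nat.le_zero.1 hτ]; simpa using hσ0.le
      · intro i
        have := ha0 i
        have := ha i 0
        simp only [pow_zero]
        nlinarith
    | succ t ih =>
      obtain ⟨h1, h2⟩ := ih
      have h3 := fun i => abound t i (h2 i)
      refine ⟨fun τ hτ => ?_, fun i => ?_⟩
      · rcases Nat.lt_or_ge t τ with h | h
        · rw [show τ = t+1 by omega]; exact step t h1 h3
        · exact h1 τ h
      · have h9 : ρ^(t+1) ≤ ρ^t := pow_le_pow_of_le_one hρ0.le hρlt.le (by omega)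
        have h10 := h2 i
        by_cases hi : i = cyc hn t
        · have := step2 t h1 h3
          rw [← hi] at this
          nlinarith [sq_nonneg (q t)]
        · rw [haf t i hi]
          nlinarith
  have hlin : ∀ t, σ t ≤ ε * ρ^t := fun t => (inv t).1 t le_rfl
  have hal : ∀ i t, a i t ≤ δ0 := fun i t => abound t i ((inv t).2 i)
  have hρt : Tendsto (fun t : ℕ => ρ^t) atTop (nhds 0) :=
    tendsto_pow_atTop_nhds_zero_of_lt_one hρ0.le hρlt
  have hσt : Tendsto σ atTop (nhds 0) := by
    refine squeeze_zero (fun t => (hσ t).le) hlin ?_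
    simpa using hρt.const_mul ε
  -- q tends to zero
  have hqt : Tendsto q atTop (nhds 0) := by
    set W : ℕ → ℝ := fun t => ∑ i, (a i t)^2 + C * ρ^t with hW
    have hW1 : ∀ t, (q t)^2/4 ≤ W t - W (t+1) := by
      intro t
      have h1 := step2 t (inv t).1 (fun i => hal i t)
      have h2 : ∑ i, (a i (t+1))^2 - ∑ i, (a i t)^2 =
          (a (cyc hn t) (t+1))^2 - (a (cyc hn t) t)^2 := by
        rw [← Finset.sum_sub_distrib]
        apply Finset.sum_eq_single
        · intro i _ hi
          rw [haf t i hi, sub_self]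
        · intro h; exact absurd (Finset.mem_univ _) h
      simp only [hW]
      linarith
    have hWa : Antitone W := antitone_nat_of_succ_le fun t => by
      have := hW1 t
      nlinarith [sq_nonneg (q t)]
    have hWb : BddBelow (Set.range W) := ⟨0, by
      rintro _ ⟨t, rfl⟩
      have : 0 < ρ^t := pow_pos hρ0 _
      have : 0 ≤ ∑ i, (a i t)^2 := Finset.sum_nonneg fun i _ => sq_nonneg _
      simp only [hW]; positivity⟩
    have hWt := tendsto_atTop_ciInf hWa hWb
    have hWd : Tendsto (fun t => W t - W (t+1)) atTop (nhds 0) := by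
      have := hWt.sub (hWt.comp (tendsto_add_atTop_nat 1))
      simpa using this
    have hq2 : Tendsto (fun t => (q t)^2) atTop (nhds 0) := by
      refine squeeze_zero (fun t => sq_nonneg _) (fun t => ?_) (g := fun t => 4 * (W t - W (t+1))) ?_
      · linarith [hW1 t]
      · simpa using hWd.const_mul 4
    have := hq2.sqrt
    simpa [Real.sqrt_sq, hq] using this
  have hσb := hσt.bddAbove_range
  have hqb := hqt.bddAbove_range
  set U := tailSup σ with hU
  set Q := tailSup q with hQ
  have hUa : Antitone U := tailSup_anti hσb
  have hQa : Antitone Q := tailSup_anti hqb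
  have hUp : ∀ t, 0 < U t := fun t => (hσ t).trans_le (le_tailSup hσb le_rfl)
  have hQp : ∀ t, 0 ≤ Q t := fun t => (hq t).trans (le_tailSup hqb le_rfl)
  have main : ∀ m s, m + n ≤ s + 1 →
      σ (s+1) ≤ 2 * κ^2 * ((2 * κ^2 * Q m + Lt * U m) * U m + κ^2 * δ0 * U (m+n)) := by
    intro m s hms
    have h3 := F1 s (fun i => by linarith [hal i s])
    have h4 : ∑ i, (d i s + Lt * (e i s)^2) ≤
        ∑ i : Fin n, ((2 * κ^2 * Q m + Lt * U m) * U m + κ^2 * δ0 * U (m+n)) := by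
      apply Finset.sum_le_sum
      intro i _
      obtain ⟨s', g1, g2, g3⟩ := cyc_first hn i s
      obtain ⟨τ, k1, k2, k3⟩ := last i s
      have g4 := F3 s'
      rw [g2, g3 d hdf, g3 e hef, g3 a haf] at g4
      have g5 : e i s ≤ U m := by rw [k3]; exact le_tailSup hσb (by omega)
      have g6 : σ (s'+1) ≤ U (m+n) := le_tailSup hσb (by omega)
      have g7 : U (m+n) ≤ U m := hUa (by omega)
      have g8 : q s' ≤ Q m := le_tailSup hqb (by omega)
      have g9 : κ^2 * q s' * (e i s + σ (s'+1)) ≤ κ^2 * Q m * (U m + U m) := by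
        apply mul_le_mul _ (by linarith) (by linarith [he i s, hσ (s'+1)])
        · exact mul_nonneg (by positivity) (hQp m)
        · exact mul_le_mul_of_nonneg_left g8 (by positivity)
      have g10 : κ^2 * a i s * σ (s'+1) ≤ κ^2 * δ0 * U (m+n) := by
        apply mul_le_mul _ g6 (hσ _).le (by positivity)
        exact mul_le_mul_of_nonneg_left (hal i s) (by positivity)
      have g11 : Lt * (e i s)^2 ≤ Lt * U m * U m := by
        have := mul_le_mul g5 g5 (he i s) (hUp m).le
        nlinarith
      linarith
    rw [Finset.sum_const, Finset.card_univ, Fintype.card_fin, nsmul_eq_mul] at h4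
    have h5 := h3.trans (mul_le_mul_of_nonneg_left h4 (show 0 ≤ 2 * κ^2 by positivity))
    refine le_of_mul_le_mul_left (h5.trans (le_of_eq ?_)) hn0
    ring
  have main2 : ∀ m, U (m+n) ≤ (4 * κ^2 * (2 * κ^2 * Q m + Lt * U m)) * U m := by
    intro m
    have h1 : U (m+n) ≤ 2 * κ^2 * ((2 * κ^2 * Q m + Lt * U m) * U m + κ^2 * δ0 * U (m+n)) := by
      apply tailSup_le
      intro s hs
      obtain ⟨r, rfl⟩ : ∃ r, s = r + 1 := ⟨s - 1, by omega⟩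
      exact main m r hs
    have h2 : 2 * κ^2 * (κ^2 * δ0 * U (m+n)) = U (m+n) / 4 := by
      calc _ = 2 * (κ^4 * δ0) * U (m+n) := by ring
        _ = _ := by rw [hδκ]; ring
    have h3 := hUp (m+n)
    linarith
  obtain ⟨ζ, z1, z2, z3⟩ := build_zeta hn (U := U)
    (ω := fun m => 4 * κ^2 * (2 * κ^2 * Q m + Lt * U m)) hUa
    (by
      intro s t hst
      have h1 := hUa hst
      have h2 := hQa hst
      simp only
      gcongr)
    (by
      intro t
      have h1 := hUp t
      have h2 := hQp t
      positivity)
    (by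
      have h1 := tailSup_tendsto (fun t => (hσ t).le) hσt
      have h2 := tailSup_tendsto hq hqt
      have := ((h2.const_mul (2 * κ^2)).add (h1.const_mul Lt)).const_mul (4 * κ^2)
      simpa using this)
    main2
  exact ⟨ζ, z1, fun t => (le_tailSup hσb le_rfl).trans (z2 t), z3⟩

theorem toFn_applyM {p : ℕ} (A : Mat p) (v : Vec p) : toFn (applyM A v) = A *ᵥ toFn v := by
  simp [toFn, applyM, Matrix.toEuclideanCLM]
  rfl

theorem applyM_apply {p : ℕ} (A : Mat p) (v : Vec p) (i : Fin p) :
    applyM A v i = ∑ j, A i j * v j := by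
  have := congrFun (toFn_applyM A v) i
  exact this

theorem dotV_eq {p : ℕ} (a b : Vec p) : dotV a b = ⟪a, b⟫ := by
  simp [dotV, toFn, PiLp.inner_apply, dotProduct, mul_comm]

theorem quadForm_eq {p : ℕ} (B : Mat p) (u v : Vec p) : quadForm B u v = ⟪u, applyM B v⟫ := by
  rw [quadForm, ← toFn_applyM]; exact dotV_eq _ _

theorem applyM_mul {p : ℕ} (A B : Mat p) (v : Vec p) :
    applyM (A * B) v = applyM A (applyM B v) := by
  simp [applyM, map_mul]

theorem applyM_one {p : ℕ} (v : Vec p) : applyM (1 : Mat p) v = v := by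
  simp [applyM]

theorem applyM_addL {p : ℕ} (A B : Mat p) (v : Vec p) :
    applyM (A + B) v = applyM A v + applyM B v := by
  simp [applyM, map_add]

theorem applyM_subL {p : ℕ} (A B : Mat p) (v : Vec p) :
    applyM (A - B) v = applyM A v - applyM B v := by
  simp [applyM, map_sub]

theorem applyM_add {p : ℕ} (A : Mat p) (u v : Vec p) :
    applyM A (u + v) = applyM A u + applyM A v := by
  simp [applyM, map_add]

theorem applyM_sub {p : ℕ} (A : Mat p) (u v : Vec p) :
    applyM A (u - v) = applyM A u - applyM A v := by
  simp [applyM, map_sub]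

theorem applyM_smul {p : ℕ} (A : Mat p) (c : ℝ) (v : Vec p) :
    applyM A (c • v) = c • applyM A v := by
  simp [applyM]

theorem applyM_symm {p : ℕ} {A : Mat p} (hA : A.IsSymm) (u v : Vec p) :
    ⟪u, applyM A v⟫ = ⟪applyM A u, v⟫ := by
  rw [← dotV_eq, ← dotV_eq, dotV, dotV, toFn_applyM, toFn_applyM, Matrix.dotProduct_mulVec,
    ← Matrix.mulVec_transpose, hA.eq]

/-- a matrix as a Euclidean vector -/
def vecz {p : ℕ} : Mat p →ₗ[ℝ] EuclideanSpace ℝ (Fin p × Fin p) where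
  toFun A := WithLp.toLp 2 (fun ij => A ij.1 ij.2)
  map_add' A B := by ext; simp
  map_smul' c A := by ext; simp

theorem vecz_inner {p : ℕ} (A B : Mat p) : ⟪vecz A, vecz B⟫ = ∑ i, ∑ j, A i j * B i j := by
  simp [vecz, PiLp.inner_apply, Fintype.sum_prod_type, mul_comm]

theorem frob_eq {p : ℕ} (A : Mat p) : frobNorm A = ‖vecz A‖ := by
  rw [frobNorm, norm_eq_sqrt_real_inner, vecz_inner]
  simp [sq]

theorem frob_nonneg {p : ℕ} (A : Mat p) : 0 ≤ frobNorm A := Real.sqrt_nonneg _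

theorem outer_apply {p : ℕ} (a b : Vec p) (i j : Fin p) : outer a b i j = a i * b j := rfl

theorem vecz_inner_outer {p : ℕ} (A : Mat p) (u v : Vec p) :
    ⟪vecz A, vecz (outer u v)⟫ = ⟪u, applyM A v⟫ := by
  rw [vecz_inner, ← dotV_eq]
  show _ = ∑ i, u i * applyM A v i
  simp only [applyM_apply, outer_apply, Finset.mul_sum]
  refine Finset.sum_congr rfl fun i _ => Finset.sum_congr rfl fun j _ => by ring

theorem applyM_outer {p : ℕ} (a b v : Vec p) : applyM (outer a b) v = ⟪b, v⟫ • a := by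
  ext i
  rw [applyM_apply, ← dotV_eq]
  show _ = (∑ j, b j * v j) * a i
  simp only [outer_apply, Finset.sum_mul]
  refine Finset.sum_congr rfl fun j _ => by ring

theorem outer_inner {p : ℕ} (a b u v : Vec p) :
    ⟪vecz (outer a b), vecz (outer u v)⟫ = ⟪a, u⟫ * ⟪b, v⟫ := by
  rw [vecz_inner_outer, applyM_outer, inner_smul_right, real_inner_comm a u]; ring

theorem norm_outer {p : ℕ} (a b : Vec p) : ‖vecz (outer a b)‖ = ‖a‖ * ‖b‖ := by
  rw [← sq_eq_sq₀ (norm_nonneg _) (by positivity), ← real_inner_self_eq_norm_sq, outer_inner,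
    real_inner_self_eq_norm_sq, real_inner_self_eq_norm_sq]; ring

theorem norm_applyM_le {p : ℕ} (A : Mat p) (v : Vec p) : ‖applyM A v‖ ≤ frobNorm A * ‖v‖ := by
  have h : ‖applyM A v‖ ^ 2 ≤ ‖vecz A‖ * (‖applyM A v‖ * ‖v‖) := by
    rw [← norm_outer, ← real_inner_self_eq_norm_sq, ← vecz_inner_outer]
    exact real_inner_le_norm _ _
  rw [frob_eq]
  by_cases h0 : ‖applyM A v‖ = 0
  · rw [h0]; positivity
  · have : 0 < ‖applyM A v‖ := lt_of_le_of_ne (norm_nonneg _) (Ne.symm h0)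
    refine le_of_mul_le_mul_left ?_ this
    calc _ = ‖applyM A v‖ ^ 2 := by ring
      _ ≤ _ := h
      _ = _ := by ring

theorem mul_outer {p : ℕ} (A : Mat p) (a b : Vec p) : A * outer a b = outer (applyM A a) b := by
  ext i j
  rw [Matrix.mul_apply, outer_apply, applyM_apply, Finset.sum_mul]
  exact Finset.sum_congr rfl fun k _ => by rw [outer_apply]; ring

theorem outer_mul {p : ℕ} {A : Mat p} (hA : A.IsSymm) (a b : Vec p) :
    outer a b * A = outer a (applyM A b) := by
  ext i j
  rw [Matrix.mul_apply, outer_apply, applyM_apply, Finset.mul_sum]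
  exact Finset.sum_congr rfl fun k _ => by rw [outer_apply, hA.apply]; ring

theorem outer_addL {p : ℕ} (a b c : Vec p) : outer (a + b) c = outer a c + outer b c := by
  ext i j; simp [outer_apply]; ring

theorem outer_addR {p : ℕ} (a b c : Vec p) : outer c (a + b) = outer c a + outer c b := by
  ext i j; simp [outer_apply]; ring

theorem bfgs_ideal {p : ℕ} {E : Mat p} (hE : E.IsSymm) (hE2 : frobNorm E ≤ 1/2) {s : Vec p}
    (hs : s ≠ 0) :
    ‖vecz (bfgsUpdate (1 + E) s s - 1)‖^2 ≤ ‖vecz E‖^2 - (‖applyM E s‖/‖s‖)^2/4 := by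
  have hB : (1 + E : Mat p).IsSymm := Matrix.isSymm_one.add hE
  set w := applyM (1 + E) s with hw
  have hw' : w = s + applyM E s := by rw [hw, applyM_addL, applyM_one]
  set k := ‖s‖^2 with hk
  have hs0 : 0 < ‖s‖ := norm_pos_iff.2 hs
  have hkp : 0 < k := by positivity
  set b := ⟪s, w⟫ with hb
  set c := ‖w‖^2 with hc
  set g := ⟪w, applyM (1+E) w⟫ with hg
  have hquad : ∀ x : Vec p, |⟪x, applyM E x⟫| ≤ 1/2 * ‖x‖^2 := by
    intro x
    have h1 := abs_real_inner_le_norm x (applyM E x)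
    have h2 := norm_applyM_le E x
    have h3 : frobNorm E * ‖x‖ ≤ 1/2 * ‖x‖ := mul_le_mul_of_nonneg_right hE2 (norm_nonneg _)
    nlinarith [norm_nonneg x, mul_le_mul_of_nonneg_left (h2.trans h3) (norm_nonneg x)]
  have hsEs : ⟪s, applyM E s⟫ = b - k := by
    rw [hb, hw', inner_add_right, real_inner_self_eq_norm_sq]; ring
  have hwEw : ⟪w, applyM E w⟫ = g - c := by
    rw [hg, applyM_addL, applyM_one, inner_add_right, real_inner_self_eq_norm_sq]; ring
  have hb1 := abs_le.1 (hquad s)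
  rw [hsEs] at hb1
  have hbp : 0 < b := by linarith
  have hb2 : b ≤ 2 * k := by linarith
  have hform : bfgsUpdate (1 + E) s s - 1 = E + k⁻¹ • outer s s - b⁻¹ • outer w w := by
    rw [bfgsUpdate, dotV_eq, quadForm_eq, mul_outer, outer_mul hB, ← hw, real_inner_self_eq_norm_sq]
    abel
  have hcs : ⟪w, s⟫ = b := real_inner_comm _ _
  have hexp : ‖vecz (bfgsUpdate (1 + E) s s - 1)‖^2 =
      ‖vecz E‖^2 - 1 + c^2/b^2 + 2*c/b - 2*g/b := by
    rw [hform, map_sub, map_add, map_smul, map_smul, ← real_inner_self_eq_norm_sq]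
    simp only [inner_sub_left, inner_sub_right, inner_add_left, inner_add_right,
      real_inner_smul_left, real_inner_smul_right, outer_inner]
    rw [real_inner_comm (vecz E) (vecz (outer s s)), real_inner_comm (vecz E) (vecz (outer w w)),
      vecz_inner_outer, vecz_inner_outer, hsEs, hwEw, hcs]
    simp only [real_inner_self_eq_norm_sq]
    rw [← hk, ← hc, ← hb]
    field_simp
    ring
  set v := w - (c/b) • s with hv
  have hvBv : 1/2 * ‖v‖^2 ≤ g - c^2/b := by
    have h1 : ⟪v, applyM (1+E) v⟫ = g - c^2/b := by
      rw [hv, applyM_sub, applyM_smul, ← hw]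
      simp only [inner_sub_left, inner_sub_right, real_inner_smul_left, real_inner_smul_right]
      rw [applyM_symm hB s w, ← hw, real_inner_self_eq_norm_sq, ← hc, ← hg, ← hb]
      field_simp
      ring
    rw [← h1, applyM_addL, applyM_one, inner_add_right, real_inner_self_eq_norm_sq]
    linarith [(abs_le.1 (hquad v)).1]
  have hEs : ‖applyM E s‖^2 ≤ 2 * ‖v‖^2 + 2 * (c/b - 1)^2 * k := by
    have h1 : applyM E s = v + (c/b - 1) • s := by
      rw [hv, sub_smul, one_smul, hw']; abel
    have h2 : ‖applyM E s‖ ≤ ‖v‖ + |c/b-1| * ‖s‖ := by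
      rw [h1]
      refine (norm_add_le _ _).trans ?_
      rw [norm_smul, Real.norm_eq_abs]
    have h3 : (|c/b-1| * ‖s‖)^2 = (c/b-1)^2 * k := by rw [mul_pow, sq_abs]
    have h4 : ‖applyM E s‖^2 ≤ (‖v‖ + |c/b-1| * ‖s‖)^2 := pow_le_pow_left₀ (norm_nonneg _) h2 2
    nlinarith [sq_nonneg (‖v‖ - |c/b-1| * ‖s‖)]
  rw [hexp, div_pow, ← hk]
  have h5 : ‖applyM E s‖^2 / k ≤ 2 * (‖v‖^2 / k) + 2 * (c/b-1)^2 := by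
    rw [div_le_iff₀ hkp]
    have : (2 * (‖v‖^2 / k) + 2 * (c/b-1)^2) * k = 2 * ‖v‖^2 + 2 * (c/b-1)^2 * k := by
      field_simp
    linarith
  have h6 : ‖v‖^2 / k ≤ 2 * (‖v‖^2 / b) := by
    rw [← mul_div_assoc, div_le_div_iff₀ hkp hbp]
    nlinarith [sq_nonneg ‖v‖]
  have h7 : ‖v‖^2 / b ≤ 2 * g / b - 2 * (c/b)^2 := by
    have : 2 * g / b - 2 * (c/b)^2 = (2 * (g - c^2/b)) / b := by field_simp
    rw [this]
    apply div_le_div_of_nonneg_right _ hbp.le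
    linarith
  have h8 : c^2/b^2 = (c/b)^2 := by rw [div_pow]
  have h9 : 2*c/b = 2*(c/b) := by ring
  have h10 : 0 ≤ ‖v‖^2 / b := by positivity
  rw [h8, h9]
  nlinarith [sq_nonneg (c/b-1)]

theorem bfgs_pert {p : ℕ} {s y : Vec p} (hs : s ≠ 0) {η : ℝ} (hη : ‖y - s‖ ≤ η * ‖s‖)
    (hη2 : η ≤ 1/2) :
    ‖vecz ((dotV y s)⁻¹ • outer y y - (dotV s s)⁻¹ • outer s s)‖ ≤ 7 * η := by
  have hs0 : 0 < ‖s‖ := norm_pos_iff.2 hs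
  set k := ‖s‖^2 with hk
  have hkp : 0 < k := by positivity
  have hη0 : 0 ≤ η := by
    by_contra h
    have := norm_nonneg (y - s)
    nlinarith
  obtain ⟨r, rfl⟩ : ∃ r, y = s + r := ⟨y - s, by abel⟩
  rw [add_sub_cancel_left] at hη
  rw [dotV_eq, dotV_eq, real_inner_self_eq_norm_sq, ← hk]
  set ρ := ⟪s + r, s⟫ with hρ
  have hρ1 : ρ = k + ⟪r, s⟫ := by rw [hρ, inner_add_left, real_inner_self_eq_norm_sq]
  have hrs : |⟪r, s⟫| ≤ η * k := by
    refine (abs_real_inner_le_norm r s).trans ?_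
    rw [hk]; nlinarith
  have hrs' := abs_le.1 hrs
  have hρk : k/2 ≤ ρ := by nlinarith
  have hρp : 0 < ρ := by linarith
  have hform : ρ⁻¹ • outer (s + r) (s + r) - k⁻¹ • outer s s =
      ρ⁻¹ • (outer s r + outer r s + outer r r) + (ρ⁻¹ - k⁻¹) • outer s s := by
    rw [outer_addL, outer_addR, outer_addR, sub_smul]
    simp only [smul_add]
    abel
  rw [hform, map_add, map_smul, map_smul, map_add, map_add]
  have h1 : ‖vecz (outer s r) + vecz (outer r s) + vecz (outer r r)‖ ≤ (2 * η + η^2) * k := by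
    refine (norm_add₃_le).trans ?_
    rw [norm_outer, norm_outer, norm_outer, hk]
    have := norm_nonneg r
    nlinarith [mul_le_mul hη hη this (by positivity)]
  have h2 : |ρ⁻¹ - k⁻¹| = ρ⁻¹ * k⁻¹ * |⟪r, s⟫| := by
    have : ρ⁻¹ - k⁻¹ = ρ⁻¹ * k⁻¹ * (-⟪r, s⟫) := by
      have : -⟪r, s⟫ = k - ρ := by rw [hρ1]; ring
      rw [this]; field_simp
    rw [this, abs_mul, abs_neg, abs_of_pos (by positivity)]
  refine (norm_add_le _ _).trans ?_
  rw [norm_smul, norm_smul, norm_outer, Real.norm_eq_abs, Real.norm_eq_abs, h2,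
    abs_of_pos (by positivity)]
  have h3 : ρ⁻¹ * k⁻¹ * |⟪r, s⟫| * (‖s‖ * ‖s‖) = ρ⁻¹ * |⟪r, s⟫| := by
    rw [show ‖s‖ * ‖s‖ = k by rw [hk]; ring]; field_simp
  rw [h3, ← mul_add, inv_mul_le_iff₀ hρp]
  have h4 : 7 * η * (k/2) ≤ 7 * η * ρ := mul_le_mul_of_nonneg_left hρk (by positivity)
  nlinarith [mul_nonneg (mul_nonneg hη0 (sub_nonneg.2 hη2)) hkp.le]

theorem bfgs_core {p : ℕ} {E : Mat p} (hE : E.IsSymm) (hE2 : frobNorm E ≤ 1/2) {s y : Vec p}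
    (hs : s ≠ 0) {η : ℝ} (hη : ‖y - s‖ ≤ η * ‖s‖) (hη2 : η ≤ 1/2) :
    (frobNorm (bfgsUpdate (1 + E) s y - 1))^2 ≤
      (frobNorm E)^2 - (‖applyM E s‖/‖s‖)^2/4 + 32 * η := by
  have h1 := bfgs_ideal hE hE2 hs
  have h2 := bfgs_pert hs hη hη2
  have hη0 : 0 ≤ η := by
    have := (norm_nonneg _).trans h2
    linarith
  have hform : bfgsUpdate (1 + E) s y - 1 = (bfgsUpdate (1 + E) s s - 1) +
      ((dotV y s)⁻¹ • outer y y - (dotV s s)⁻¹ • outer s s) := by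
    simp only [bfgsUpdate]; abel
  rw [frob_eq] at hE2 ⊢
  rw [frob_eq, hform, map_add]
  set X := vecz (bfgsUpdate (1 + E) s s - 1)
  set D := vecz ((dotV y s)⁻¹ • outer y y - (dotV s s)⁻¹ • outer s s)
  have h3 : ‖X + D‖^2 ≤ (‖X‖ + ‖D‖)^2 := pow_le_pow_left₀ (norm_nonneg _) (norm_add_le _ _) 2
  have hX : ‖X‖ ≤ 1/2 := by
    have : ‖X‖^2 ≤ (1/2)^2 := by
      have := pow_le_pow_left₀ (norm_nonneg _) hE2 2
      nlinarith [sq_nonneg (‖applyM E s‖/‖s‖)]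
    exact (sq_le_sq₀ (norm_nonneg _) (by norm_num)).1 this
  have hXD : ‖X‖ * ‖D‖ ≤ 1/2 * (7 * η) := mul_le_mul hX h2 (norm_nonneg _) (by norm_num)
  have hD : ‖D‖ * ‖D‖ ≤ (7 * η) * (7 * η) := mul_le_mul h2 h2 (norm_nonneg _) (by positivity)
  nlinarith

theorem bfgs_transform {p : ℕ} {M : Mat p} (hM : M.IsSymm) {B : Mat p} 
    (s y : Vec p) :
    M * bfgsUpdate B (applyM M s) y * M = bfgsUpdate (M * B * M) s (applyM M y) := by
  have h1 : dotV (applyM M y) s = dotV y (applyM M s) := by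
    rw [dotV_eq, dotV_eq, applyM_symm hM]
  have h2 : quadForm (M * B * M) s s = quadForm B (applyM M s) (applyM M s) := by
    rw [quadForm_eq, quadForm_eq, applyM_mul, applyM_mul, applyM_symm hM]
  have h3 : outer (applyM M y) (applyM M y) = M * outer y y * M := by
    rw [mul_outer, outer_mul hM]
  have h4 : outer (applyM M s) (applyM M s) = M * outer s s * M := by
    rw [mul_outer, outer_mul hM]
  rw [bfgsUpdate, bfgsUpdate, h1, h2, h3, h4]
  simp only [mul_add, add_mul, mul_sub, sub_mul, Matrix.mul_smul, Matrix.smul_mul, mul_assoc]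

theorem grad_lin {p n : ℕ} (P : IQNProblem p n) (i : Fin n) {a b : Vec p} {R : ℝ}
    (ha : ‖a - P.xstar‖ ≤ R) (hb : ‖b - P.xstar‖ ≤ R) :
    ‖gradient (P.f i) a - gradient (P.f i) b - applyM (P.Hess i P.xstar) (a - b)‖
      ≤ P.Ltil * R * ‖a - b‖ := by
  have := (convex_closedBall P.xstar R).norm_image_sub_le_of_norm_hasFDerivWithin_le'
    (f := gradient (P.f i)) (f' := fun x => Matrix.toEuclideanCLM (𝕜 := ℝ) (P.Hess i x))
    (φ := Matrix.toEuclideanCLM (𝕜 := ℝ) (P.Hess i P.xstar)) (C := P.Ltil * R)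
    (fun x _ => (P.hHess i x).hasFDerivWithinAt)
    (fun x hx => by
      rw [mem_closedBall_iff_norm] at hx
      rw [← map_sub]
      exact (P.hLip i x P.xstar).trans (mul_le_mul_of_nonneg_left hx P.hLtil.le))
    (x := b) (y := a) (mem_closedBall_iff_norm.2 hb) (mem_closedBall_iff_norm.2 ha)
  exact this

theorem grad_sum {p n : ℕ} (P : IQNProblem p n) : ∑ i, gradient (P.f i) P.xstar = 0 := by
  have hn : (n : ℝ)⁻¹ ≠ 0 := by
    have := P.hn
    positivity
  have h := P.hopt
  have hd : ∀ i, HasFDerivAt (P.f i) (fderiv ℝ (P.f i) P.xstar) P.xstar := fun i =>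
    (((P.hC2 i).differentiable (by norm_num)) P.xstar).hasFDerivAt
  have h1 : HasFDerivAt (fun x => (n : ℝ)⁻¹ * ∑ i, P.f i x)
      ((n : ℝ)⁻¹ • ∑ i, fderiv ℝ (P.f i) P.xstar) P.xstar :=
    (HasFDerivAt.fun_sum fun i _ => hd i).const_mul _
  rw [gradient, h1.fderiv, map_smulₛₗ, map_sum] at h
  have h2 := (smul_eq_zero.1 h).resolve_left (by simpa using hn)
  exact h2

structure Wt {p : ℕ} (M H N : Mat p) (κ : ℝ) : Prop where
  symM : M.IsSymm
  symN : N.IsSymm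
  MN : M * N = 1
  NM : N * M = 1
  MH : M * H = N
  MHM : M * H * M = 1
  hM : ∀ v, ‖applyM M v‖ ≤ κ * ‖v‖
  hN : ∀ v, ‖applyM N v‖ ≤ κ * ‖v‖

theorem Wt.mk' {p : ℕ} {M H : Mat p} (hM : M.PosDef) (h : M * H * M = 1) {κ : ℝ}
    (h1 : frobNorm M ≤ κ) (h2 : frobNorm (H * M) ≤ κ) : Wt M H (H * M) κ := by
  have hs : M.IsSymm := by
    have := hM.1
    rwa [Matrix.IsHermitian, Matrix.conjTranspose_eq_transpose_of_trivial] at this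
  have hMN : M * (H * M) = 1 := by rw [← mul_assoc]; exact h
  have hNM : (H * M) * M = 1 := mul_eq_one_comm.1 hMN
  refine ⟨hs, ?_, hMN, hNM, ?_, h, fun v => ?_, fun v => ?_⟩
  · have h3 : (H * M)ᵀ * M = 1 := by
      have := congrArg Matrix.transpose hMN
      rwa [Matrix.transpose_mul, hs.eq, Matrix.transpose_one] at this
    calc (H * M)ᵀ = (H * M)ᵀ * (M * (H * M)) := by rw [hMN, mul_one]
      _ = H * M := by rw [← mul_assoc, h3, one_mul]
  · calc M * H = M * H * (M * (H * M)) := by rw [hMN, mul_one]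
      _ = H * M := by rw [← mul_assoc, h, one_mul]
  · exact (norm_applyM_le _ _).trans (mul_le_mul_of_nonneg_right h1 (norm_nonneg _))
  · exact (norm_applyM_le _ _).trans (mul_le_mul_of_nonneg_right h2 (norm_nonneg _))

theorem Wt.sub_eq {p : ℕ} {M H N : Mat p} {κ : ℝ} (W : Wt M H N κ) (B : Mat p) :
    B - H = N * (M * (B - H) * M) * N := by
  calc B - H = (N * M) * (B - H) * (M * N) := by rw [W.NM, W.MN, one_mul, mul_one]
    _ = _ := by simp only [mul_assoc]

theorem Wt.one_add {p : ℕ} {M H N : Mat p} {κ : ℝ} (W : Wt M H N κ) (B : Mat p) :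
    1 + M * (B - H) * M = M * B * M := by
  rw [mul_sub, sub_mul, W.MHM]; abel

theorem Wt.diff_le {p : ℕ} {M H N : Mat p} {κ : ℝ} (W : Wt M H N κ) (hκ : 0 ≤ κ) (B : Mat p)
    (v : Vec p) :
    ‖applyM (B - H) v‖ ≤ κ * ‖applyM (M * (B - H) * M) (applyM N v)‖ := by
  conv_lhs => rw [W.sub_eq B, applyM_mul, applyM_mul]
  exact W.hN _

theorem Wt.diff_le' {p : ℕ} {M H N : Mat p} {κ : ℝ} (W : Wt M H N κ) (hκ : 0 ≤ κ) (B : Mat p)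
    (v : Vec p) :
    ‖applyM (B - H) v‖ ≤ κ^2 * wNorm M (B - H) * ‖v‖ := by
  refine (W.diff_le hκ B v).trans ?_
  have h1 := norm_applyM_le (M * (B - H) * M) (applyM N v)
  have h2 := mul_le_mul_of_nonneg_left (W.hN v) (frob_nonneg (M * (B - H) * M))
  calc _ ≤ κ * (frobNorm (M * (B - H) * M) * (κ * ‖v‖)) :=
        mul_le_mul_of_nonneg_left (h1.trans h2) hκ
    _ = _ := by rw [wNorm]; ring

theorem Wt.quad_low {p : ℕ} {M H N : Mat p} {κ : ℝ} (W : Wt M H N κ) (hκ : 0 ≤ κ) (B : Mat p)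
    (hB : wNorm M (B - H) ≤ 1/2) (v : Vec p) :
    ‖v‖^2 ≤ 2 * κ^2 * ⟪v, applyM B v⟫ := by
  set u := applyM N v with hu
  have h1 : v = applyM M u := by rw [hu, ← applyM_mul, W.MN, applyM_one]
  have h2 : ⟪v, applyM B v⟫ = ⟪u, applyM (1 + M * (B - H) * M) u⟫ := by
    rw [W.one_add, applyM_mul, applyM_mul, applyM_symm W.symM, ← h1]
  rw [applyM_addL, applyM_one, inner_add_right, real_inner_self_eq_norm_sq] at h2
  have h3 := (abs_le.1 (abs_real_inner_le_norm u (applyM (M * (B - H) * M) u))).1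
  have h4 : ‖applyM (M * (B - H) * M) u‖ ≤ 1/2 * ‖u‖ :=
    (norm_applyM_le _ _).trans (mul_le_mul_of_nonneg_right hB (norm_nonneg _))
  have h5 : ‖v‖^2 ≤ κ^2 * ‖u‖^2 := by
    rw [← mul_pow]
    apply pow_le_pow_left₀ (norm_nonneg _)
    rw [h1]; exact W.hM u
  have h6 : ‖u‖^2 ≤ 2 * ⟪v, applyM B v⟫ := by
    nlinarith [mul_le_mul_of_nonneg_left h4 (norm_nonneg u)]
  nlinarith [mul_le_mul_of_nonneg_left h6 (sq_nonneg κ)]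

theorem Wt.update {p : ℕ} {M H N : Mat p} {κ : ℝ} (W : Wt M H N κ) (hκ : 0 ≤ κ) {B : Mat p}
    (hBs : (B - H).IsSymm) (hB : wNorm M (B - H) ≤ 1/2) {s y : Vec p} (hs : s ≠ 0) {η : ℝ}
    (hη0 : 0 ≤ η) (hη : ‖y - applyM H s‖ ≤ η * ‖s‖) (hη2 : κ^2 * η ≤ 1/2) :
    (wNorm M (bfgsUpdate B s y - H))^2 ≤ (wNorm M (B - H))^2 -
      (‖applyM (M * (B - H) * M) (applyM N s)‖ / ‖applyM N s‖)^2/4 + 32 * (κ^2 * η) := by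
  set u := applyM N s with hu
  have h1 : s = applyM M u := by rw [hu, ← applyM_mul, W.MN, applyM_one]
  have hu0 : u ≠ 0 := by
    intro h
    rw [h] at h1
    apply hs
    rw [h1]; simp [applyM]
  have hsu : ‖s‖ ≤ κ * ‖u‖ := by rw [h1]; exact W.hM u
  have hsym : (M * (B - H) * M).IsSymm := by
    rw [Matrix.IsSymm, Matrix.transpose_mul, Matrix.transpose_mul, W.symM.eq, hBs.eq, mul_assoc]
  have h2 : ‖applyM M y - u‖ ≤ (κ^2 * η) * ‖u‖ := by
    have h3 : applyM M y - u = applyM M (y - applyM H s) := by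
      rw [applyM_sub, ← applyM_mul, W.MH]
    rw [h3]
    calc _ ≤ κ * ‖y - applyM H s‖ := W.hM _
      _ ≤ κ * (η * (κ * ‖u‖)) := by
        apply mul_le_mul_of_nonneg_left _ hκ
        exact hη.trans (mul_le_mul_of_nonneg_left hsu hη0)
      _ = _ := by ring
  have h4 := bfgs_core hsym hB hu0 h2 hη2
  rw [W.one_add, ← bfgs_transform W.symM, ← h1, ← W.one_add] at h4
  rw [add_sub_cancel_left] at h4
  exact h4

theorem iqn_step {p n : ℕ} {P : IQNProblem p n} (S : IQNState P) (t : ℕ) :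
    ∑ i, applyM (S.B i t) (S.x (t+1) - P.xstar) =
    ∑ i, (applyM (S.B i t - P.Hess i P.xstar) (S.z i t - P.xstar) -
      (gradient (P.f i) (S.z i t) - gradient (P.f i) P.xstar -
        applyM (P.Hess i P.xstar) (S.z i t - P.xstar))) := by
  have hn : (n : ℝ)⁻¹ ≠ 0 := by
    have := P.hn
    positivity
  have hav : ∀ v, applyM ((n : ℝ)⁻¹ • ∑ i, S.B i t) v = (n : ℝ)⁻¹ • ∑ i, applyM (S.B i t) v := by
    intro v
    simp [applyM, map_smul, map_sum]
  have h1 : applyM ((n : ℝ)⁻¹ • ∑ i, S.B i t) (S.x (t+1)) =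
      (n : ℝ)⁻¹ • ∑ i, applyM (S.B i t) (S.z i t)
        - (n : ℝ)⁻¹ • ∑ i, gradient (P.f i) (S.z i t) := by
    rw [S.hx t, ← applyM_mul,
      Matrix.mul_nonsing_inv _ ((Matrix.isUnit_iff_isUnit_det _).1 (S.hinv t)), applyM_one]
  rw [hav, ← smul_sub] at h1
  have h2 := smul_right_injective _ hn h1
  simp only [applyM_sub, applyM_subL, Finset.sum_sub_distrib, h2, grad_sum]
  abel

theorem Wt.symH {p : ℕ} {M H N : Mat p} {κ : ℝ} (W : Wt M H N κ) : H.IsSymm := by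
  have : H = N * N := by
    calc H = (N * M) * H := by rw [W.NM, one_mul]
      _ = N * N := by rw [mul_assoc, W.MH]
  rw [Matrix.IsSymm, this, Matrix.transpose_mul, W.symN.eq]

/-- second part of Theorem 2 of the paper: locally, the residual
sequence `‖x^t − x*‖` converges to zero R-superlinearly: it is dominated by a
positive sequence `ζ^t` with `ζ^{t+1}/ζ^t → 0`. -/
theorem stmt10 {p n : ℕ} (P : IQNProblem p n) (M : Fin n → Mat p)
    (hM : ∀ i, (M i).PosDef ∧ M i * P.Hess i P.xstar * M i = 1) :
    ∃ ε > (0:ℝ), ∃ δ > (0:ℝ), ∀ S : IQNState P,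
      (∀ t, S.x t ≠ P.xstar) →
      ‖S.x 0 - P.xstar‖ < ε →
      (∀ i, wNorm (M i) (S.B i 0 - P.Hess i P.xstar) < δ) →
      ∃ ζ : ℕ → ℝ, (∀ t, 0 < ζ t) ∧
        (∀ t, ‖S.x t - P.xstar‖ ≤ ζ t) ∧
        Tendsto (fun t : ℕ => ζ (t+1) / ζ t) atTop (nhds 0) := by
  set H : Fin n → Mat p := fun i => P.Hess i P.xstar with hH
  set κ : ℝ := 1 + ∑ i, (frobNorm (M i) + frobNorm (H i * M i)) with hκ
  have hterm : ∀ i, 0 ≤ frobNorm (M i) + frobNorm (H i * M i) := fun i =>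
    add_nonneg (frob_nonneg _) (frob_nonneg _)
  have hκ1 : 1 ≤ κ := by
    have := Finset.sum_nonneg (s := Finset.univ) fun i _ => hterm i
    linarith
  have hκ0 : 0 ≤ κ := by linarith
  have hW : ∀ i, Wt (M i) (H i) (H i * M i) κ := by
    intro i
    have h1 := Finset.single_le_sum (s := Finset.univ) (fun i _ => hterm i) (Finset.mem_univ i)
    have h2 := frob_nonneg (M i)
    have h3 := frob_nonneg (H i * M i)
    exact Wt.mk' (hM i).1 (hM i).2 (by linarith) (by linarith)
  clear_value κ
  obtain ⟨ε, hε, δ, hδ, main⟩ := scalar_main P.hn κ P.Ltil hκ1 P.hLtil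
  refine ⟨ε, hε, δ, hδ, fun S hne hx0 hB0 => ?_⟩
  set N : Fin n → Mat p := fun i => H i * M i with hN
  set s : ℕ → Vec p := fun t => S.z (cyc P.hn t) (t+1) - S.z (cyc P.hn t) t with hs
  refine main (fun t => ‖S.x t - P.xstar‖) (fun i t => ‖S.z i t - P.xstar‖)
    (fun i t => wNorm (M i) (S.B i t - H i))
    (fun i t => ‖applyM (S.B i t - H i) (S.z i t - P.xstar)‖)
    (fun t => ‖applyM (M (cyc P.hn t) * (S.B (cyc P.hn t) t - H (cyc P.hn t)) * M (cyc P.hn t))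
      (applyM (N (cyc P.hn t)) (s t))‖ / ‖applyM (N (cyc P.hn t)) (s t)‖)
    ?_ ?_ ?_ ?_ ?_ ?_ ?_ ?_ ?_ ?_ ?_ ?_ ?_ hx0 hB0
  · intro t
    exact norm_pos_iff.2 (sub_ne_zero.2 (hne t))
  · intro i t; positivity
  · intro i t; exact frob_nonneg _
  · intro t; positivity
  · intro i; simp only [S.hz0]
  · intro t; simp only [S.hzupd]
  · intro t j hj; simp only [S.hzfix t j hj]
  · intro t j hj; simp only [S.hBfix t j hj]
  · intro t j hj; simp only [S.hBfix t j hj, S.hzfix t j hj]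
  · intro t ha
    set d := S.x (t+1) - P.xstar with hd
    have h1 := iqn_step S t
    rw [← hd] at h1
    have h2 : ∑ i : Fin n, ‖d‖^2 ≤ ∑ i, 2 * κ^2 * ⟪d, applyM (S.B i t) d⟫ :=
      Finset.sum_le_sum fun i _ => (hW i).quad_low hκ0 _ (ha i) d
    rw [Finset.sum_const, Finset.card_univ, Fintype.card_fin, nsmul_eq_mul, ← Finset.mul_sum,
      ← inner_sum, h1] at h2
    have h3 := real_inner_le_norm d (∑ i, (applyM (S.B i t - H i) (S.z i t - P.xstar) -
      (gradient (P.f i) (S.z i t) - gradient (P.f i) P.xstar -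
        applyM (H i) (S.z i t - P.xstar))))
    have h4 : ‖∑ i, (applyM (S.B i t - H i) (S.z i t - P.xstar) -
      (gradient (P.f i) (S.z i t) - gradient (P.f i) P.xstar -
        applyM (H i) (S.z i t - P.xstar)))‖ ≤
        ∑ i, (‖applyM (S.B i t - H i) (S.z i t - P.xstar)‖ +
          P.Ltil * ‖S.z i t - P.xstar‖^2) := by
      refine (norm_sum_le _ _).trans (Finset.sum_le_sum fun i _ => ?_)
      refine (norm_sub_le _ _).trans ?_
      have := grad_lin P i (a := S.z i t) (b := P.xstar) le_rfl (by simp)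
      have e : P.Ltil * ‖S.z i t - P.xstar‖^2 =
        P.Ltil * ‖S.z i t - P.xstar‖ * ‖S.z i t - P.xstar‖ := by ring
      rw [e]
      exact add_le_add_right this _
    have hd0 : 0 < ‖d‖ := norm_pos_iff.2 (sub_ne_zero.2 (hne (t+1)))
    have h5 := mul_le_mul_of_nonneg_left
      (h3.trans (mul_le_mul_of_nonneg_left h4 hd0.le)) (show 0 ≤ 2 * κ^2 by positivity)
    have h6 := h2.trans h5
    refine le_of_mul_le_mul_left ?_ hd0
    calc _ = n * ‖d‖^2 := by ring
      _ ≤ _ := h6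
      _ = _ := by ring
  · intro i t
    exact (hW i).diff_le' hκ0 _ _
  · intro t η h1 h2 h3 h4
    have hη0 : 0 ≤ η := (norm_nonneg _).trans h3
    have hsym : (S.B (cyc P.hn t) t - H (cyc P.hn t)).IsSymm :=
      (S.hsym _ _).sub (hW _).symH
    have hz : ‖S.z (cyc P.hn t) (t+1) - P.xstar‖ ≤ η := by rw [S.hzupd]; exact h3
    have h5 := (hW (cyc P.hn t)).update hκ0 hsym h1 (S.hs t)
      (mul_nonneg P.hLtil.le hη0) (grad_lin P (cyc P.hn t) hz h2)
      (by rw [← mul_assoc]; exact h4)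
    rw [← S.hBupd t, ← mul_assoc (κ^2)] at h5
    exact h5
  · intro t
    set i := cyc P.hn t with hi
    set X := M i * (S.B i t - H i) * M i with hX
    have e1 : S.z i t - P.xstar = (S.x (t+1) - P.xstar) - s t := by
      rw [hs]; simp only; rw [← hi, ← S.hzupd t, ← hi]; abel
    have hsn : ‖s t‖ ≤ ‖S.z i t - P.xstar‖ + ‖S.x (t+1) - P.xstar‖ := by
      have : s t = (S.x (t+1) - P.xstar) - (S.z i t - P.xstar) := by rw [e1]; abel
      have h0 := norm_sub_le (S.x (t+1) - P.xstar) (S.z i t - P.xstar)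
      rw [← this] at h0
      linarith
    have hu0 : 0 < ‖applyM (N i) (s t)‖ := by
      rw [norm_pos_iff]
      intro h
      apply S.hs t
      show s t = 0
      rw [← applyM_one (s t), ← (hW i).MN, applyM_mul]
      show applyM (M i) (applyM (N i) (s t)) = 0
      rw [h]; simp [applyM]
    set u := applyM (N i) (s t) with hu
    have hq0 : 0 ≤ ‖applyM X u‖ / ‖u‖ := by positivity
    have h1 : ‖applyM (S.B i t - H i) (s t)‖ ≤ κ^2 * (‖applyM X u‖ / ‖u‖) * ‖s t‖ := by
      calc _ ≤ κ * ‖applyM X u‖ := (hW i).diff_le hκ0 _ _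
        _ = κ * ((‖applyM X u‖ / ‖u‖) * ‖u‖) := by rw [div_mul_cancel₀ _ hu0.ne']
        _ ≤ κ * ((‖applyM X u‖ / ‖u‖) * (κ * ‖s t‖)) := by
          apply mul_le_mul_of_nonneg_left _ hκ0
          exact mul_le_mul_of_nonneg_left ((hW i).hN _) hq0
        _ = _ := by ring
    have h2 := (hW i).diff_le' hκ0 (S.B i t) (S.x (t+1) - P.xstar)
    have h3 : ‖applyM (S.B i t - H i) (S.z i t - P.xstar)‖ ≤
        ‖applyM (S.B i t - H i) (S.x (t+1) - P.xstar)‖ + ‖applyM (S.B i t - H i) (s t)‖ := by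
      conv_lhs => rw [e1, applyM_sub]
      exact norm_sub_le _ _
    have h4 := mul_le_mul_of_nonneg_left hsn
      (show 0 ≤ κ^2 * (‖applyM X u‖ / ‖u‖) by positivity)
    linarith

end
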